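/- Closure of condition (E) for 1/2 < a ≤ 1: if 1/2 < a ≤ 1, then 3·B(s)² − 2·K² ≥ 0 for every s ∈ ℝ, and if moreover s₀ > 0 satisfies the free boundary condition tanh(φ(s₀)) = B(s₀)·K/(a·sinh(2s₀)), then for every continuously differentiable h : [−s₀, s₀] → ℝ with h'(s₀) = 0, h'(−s₀) = 0, and h not identically zero, one has ∫_{−s₀}^{s₀} ( B(s)³·h'(s)² + (3·B(s)² − 2·K²)·h(s)²/B(s) ) ds > 0. -/

import Mathlib

namespace MoriCatenoid

/-- Profile function `B(s) = √(a·cosh(2s) − 1/2)` of the Mori family. -/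
noncomputable def B (a s : ℝ) : ℝ := Real.sqrt (a * Real.cosh (2 * s) - 1 / 2)

/-- Profile function `A(s) = √(a·cosh(2s) + 1/2)` of the Mori family. -/
noncomputable def A (a s : ℝ) : ℝ := Real.sqrt (a * Real.cosh (2 * s) + 1 / 2)

/-- The constant `K = √(a² − 1/4)`. -/
noncomputable def K (a : ℝ) : ℝ := Real.sqrt (a ^ 2 - 1 / 4)

/-- The angle function `φ(s) = K·∫₀ˢ dt/(A(t)²·B(t))`. -/
noncomputable def φ (a s : ℝ) : ℝ := K a * ∫ t in (0:ℝ)..s, 1 / ((A a t) ^ 2 * B a t)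

/-- The mode-one Jacobi field `f_*(s) = d/ds (A(s)·cosh(φ(s)))`. -/
noncomputable def fstar (a s : ℝ) : ℝ := deriv (fun t => A a t * Real.cosh (φ a t)) s

/-- Squared norm of the second fundamental form, `|II|²(s) = 2·(B''(s)/B(s) − 1)`. -/
noncomputable def IIsq (a s : ℝ) : ℝ := 2 * (deriv (deriv (B a)) s / B a s - 1)

/-- The mode-`k` potential `W_k(s) = |II|²(s) − 2 − k²/B(s)²`. -/
noncomputable def W (a : ℝ) (k : ℤ) (s : ℝ) : ℝ := IIsq a s - 2 - (k : ℝ) ^ 2 / (B a s) ^ 2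

/-- Inverse hyperbolic cosine: `arcosh x = log (x + √(x² − 1))`. -/
noncomputable def arcosh (x : ℝ) : ℝ := Real.log (x + Real.sqrt (x ^ 2 - 1))

/-- The axial boost field `u_*(s) = −a·sinh(2s)/B(s)`. -/
noncomputable def ustar (a s : ℝ) : ℝ := -a * Real.sinh (2 * s) / B a s

/-- The radial quadratic form of mode `k`:
`S_k(u) = ∫_{−s₀}^{s₀} (B·u'² − B·W_k·u²) − coth(r)·B(s₀)·(u(s₀)² + u(−s₀)²)`,
where `u'` is the derivative of `u` within `[−s₀, s₀]`. -/
noncomputable def Sk (a s₀ r : ℝ) (k : ℤ) (u : ℝ → ℝ) : ℝ :=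
  (∫ s in (-s₀)..s₀,
      (B a s * (derivWithin u (Set.Icc (-s₀) s₀) s) ^ 2 - B a s * W a k s * u s ^ 2))
    - Real.cosh r / Real.sinh r * B a s₀ * (u s₀ ^ 2 + u (-s₀) ^ 2)

/-! Since `cosh (2s) = 1 + 2 sinh² s`, the weight `3B² - 2K²` equals
`6a sinh² s + (2a - 1)(1 - a)`, so for `1/2 < a ≤ 1` it is nonnegative and can vanish only at
`s = 0`. The energy density is then continuous and nonnegative, and a continuous `h` that is not
identically zero is nonzero at some `s ≠ 0`, where the density is positive. -/

section

open Set

variable {c d : ℝ}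

lemma exists_mem_Icc_inter_ne_zero {D : Set ℝ} {h : ℝ → ℝ} (hcd : c < d) (hD : Dense D)
    (hh : ContinuousOn h (Icc c d)) (hne : ∃ s ∈ Icc c d, h s ≠ 0) :
    ∃ s ∈ Icc c d ∩ D, h s ≠ 0 := by
  by_contra! hzero
  obtain ⟨s, hs, hhs⟩ := hne
  have hzero_Ioo : EqOn h 0 (Ioo c d ∩ D) := fun t ht =>
    hzero t ⟨Ioo_subset_Icc_self ht.1, ht.2⟩
  have hIcc_subset : Icc c d ⊆ closure (Ioo c d ∩ D) := by
    rw [← closure_Ioo hcd.ne]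
    exact closure_minimal (hD.open_subset_closure_inter isOpen_Ioo) isClosed_closure
  exact hhs (hzero_Ioo.of_subset_closure hh continuousOn_const
    (inter_subset_left.trans Ioo_subset_Icc_self) hIcc_subset hs)

lemma integral_mul_sq_add_mul_sq_pos {p q g h : ℝ → ℝ} (hcd : c < d)
    (hp : ContinuousOn p (Icc c d)) (hq : ContinuousOn q (Icc c d))
    (hg : ContinuousOn g (Icc c d)) (hh : ContinuousOn h (Icc c d))
    (hp_nonneg : ∀ s ∈ Icc c d, 0 ≤ p s) (hq_nonneg : ∀ s ∈ Icc c d, 0 ≤ q s)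
    (hq_dense : Dense {s | q s ≠ 0}) (hne : ∃ s ∈ Icc c d, h s ≠ 0) :
    0 < ∫ s in c..d, (p s * g s ^ 2 + q s * h s ^ 2) := by
  refine intervalIntegral.integral_pos hcd
    ((hp.mul (hg.pow 2)).add (hq.mul (hh.pow 2))) (fun s hs => ?_) ?_
  · have hs' := Ioc_subset_Icc_self hs
    exact add_nonneg (mul_nonneg (hp_nonneg s hs') (sq_nonneg _))
      (mul_nonneg (hq_nonneg s hs') (sq_nonneg _))
  · obtain ⟨s, ⟨hs, hqs⟩, hhs⟩ := exists_mem_Icc_inter_ne_zero hcd hq_dense hh hne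
    have hqs_pos : 0 < q s := (hq_nonneg s hs).lt_of_ne' hqs
    exact ⟨s, hs, add_pos_of_nonneg_of_pos (mul_nonneg (hp_nonneg s hs) (sq_nonneg _))
      (mul_pos hqs_pos (sq_pos_of_ne_zero hhs))⟩

end

lemma continuous_B (a : ℝ) : Continuous (B a) := by
  unfold B
  fun_prop

section

variable {a : ℝ}

lemma B_pos (ha : 1 / 2 < a) (s : ℝ) : 0 < B a s :=
  Real.sqrt_pos.mpr (by nlinarith [Real.one_le_cosh (2 * s)])

lemma B_sq (ha : 1 / 2 ≤ a) (s : ℝ) : B a s ^ 2 = a * Real.cosh (2 * s) - 1 / 2 :=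
  Real.sq_sqrt (by nlinarith [Real.one_le_cosh (2 * s)])

lemma K_sq (ha : 1 / 2 ≤ a) : K a ^ 2 = a ^ 2 - 1 / 4 :=
  Real.sq_sqrt (by nlinarith)

lemma three_mul_B_sq_sub_two_mul_K_sq (ha : 1 / 2 ≤ a) (s : ℝ) :
    3 * B a s ^ 2 - 2 * K a ^ 2 = 6 * a * Real.sinh s ^ 2 + (2 * a - 1) * (1 - a) := by
  rw [B_sq ha, K_sq ha, Real.cosh_two_mul, Real.cosh_sq]
  ring

lemma three_mul_B_sq_sub_two_mul_K_sq_nonneg (ha : 1 / 2 ≤ a) (ha1 : a ≤ 1) (s : ℝ) :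
    0 ≤ 3 * B a s ^ 2 - 2 * K a ^ 2 := by
  rw [three_mul_B_sq_sub_two_mul_K_sq ha]
  exact add_nonneg (mul_nonneg (by linarith) (sq_nonneg _))
    (mul_nonneg (by linarith) (by linarith))

lemma three_mul_B_sq_sub_two_mul_K_sq_pos (ha : 1 / 2 ≤ a) (ha1 : a ≤ 1) {s : ℝ} (hs : s ≠ 0) :
    0 < 3 * B a s ^ 2 - 2 * K a ^ 2 := by
  rw [three_mul_B_sq_sub_two_mul_K_sq ha]
  have hsinh : Real.sinh s ≠ 0 := Real.sinh_ne_zero.mpr hs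
  exact add_pos_of_pos_of_nonneg (mul_pos (by linarith) (sq_pos_of_ne_zero hsinh))
    (mul_nonneg (by linarith) (by linarith))

theorem E_closure_a_le_one_general (ha : 1 / 2 < a) (ha1 : a ≤ 1) :
    (∀ s : ℝ, 0 ≤ 3 * B a s ^ 2 - 2 * K a ^ 2) ∧
    (∀ c d : ℝ, c < d → ∀ h : ℝ → ℝ, ContDiffOn ℝ 1 h (Set.Icc c d) →
      (∃ s ∈ Set.Icc c d, h s ≠ 0) →
      0 < ∫ s in c..d,
          (B a s ^ 3 * (derivWithin h (Set.Icc c d) s) ^ 2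
            + (3 * B a s ^ 2 - 2 * K a ^ 2) * h s ^ 2 / B a s)) := by
  refine ⟨three_mul_B_sq_sub_two_mul_K_sq_nonneg ha.le ha1, fun c d hcd h hh hne => ?_⟩
  have hB : Continuous (B a) := continuous_B a
  have hweight : Continuous fun s => (3 * B a s ^ 2 - 2 * K a ^ 2) / B a s :=
    Continuous.div (by fun_prop) hB fun s => (B_pos ha s).ne'
  have hweight_dense : Dense {s | (3 * B a s ^ 2 - 2 * K a ^ 2) / B a s ≠ 0} :=
    (dense_compl_singleton (0 : ℝ)).mono fun s hs =>
      (div_pos (three_mul_B_sq_sub_two_mul_K_sq_pos ha.le ha1 hs) (B_pos ha s)).ne'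
  simp only [mul_div_right_comm]
  exact integral_mul_sq_add_mul_sq_pos hcd (hB.pow 3).continuousOn hweight.continuousOn
    (hh.continuousOn_derivWithin (uniqueDiffOn_Icc hcd) le_rfl) hh.continuousOn
    (fun s _ => (pow_pos (B_pos ha s) 3).le)
    (fun s _ => div_nonneg (three_mul_B_sq_sub_two_mul_K_sq_nonneg ha.le ha1 s) (B_pos ha s).le)
    hweight_dense hne

end

/-- Closure of condition (E) for `1/2 < a ≤ 1`: `3·B(s)² − 2·K² ≥ 0` for all `s`,
and under the free boundary condition, for every `C¹` function `h` on `[−s₀, s₀]`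
with `h'(±s₀) = 0` and `h` not identically zero, the Picone energy with base `B`
in mode `k = 2` is strictly positive. -/
theorem E_closure_a_le_one (a : ℝ) (ha : 1 / 2 < a) (ha1 : a ≤ 1) :
    (∀ s : ℝ, 0 ≤ 3 * B a s ^ 2 - 2 * K a ^ 2) ∧
    (∀ s₀ : ℝ, 0 < s₀ →
      Real.tanh (φ a s₀) = B a s₀ * K a / (a * Real.sinh (2 * s₀)) →
      ∀ h : ℝ → ℝ, ContDiffOn ℝ 1 h (Set.Icc (-s₀) s₀) →
        derivWithin h (Set.Icc (-s₀) s₀) s₀ = 0 →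
        derivWithin h (Set.Icc (-s₀) s₀) (-s₀) = 0 →
        (∃ s ∈ Set.Icc (-s₀) s₀, h s ≠ 0) →
        0 < ∫ s in (-s₀)..s₀,
            (B a s ^ 3 * (derivWithin h (Set.Icc (-s₀) s₀) s) ^ 2
              + (3 * B a s ^ 2 - 2 * K a ^ 2) * h s ^ 2 / B a s)) := by
  obtain ⟨hnonneg, hpos⟩ := E_closure_a_le_one_general ha ha1
  exact ⟨hnonneg, fun s₀ hs₀ _ h hh _ _ => hpos (-s₀) s₀ (neg_lt_self hs₀) h hh⟩

end MoriCatenoid
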